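/- arXiv:2605.26846 — 3 statements merged into one kernel-verified Lean document; each statement's English description precedes it below -/
import Mathlib

section
/- For every real x, the sequence M ↦ (∑_{k=0}^{M} (−1)^{M−k} P_{2k}(2M, M+1/2) x^{2M−2k}) / P_{2M}(2M, M+1/2) converges to cosh(πx) as M → ∞. -/
/-!
The arguments `i - (M + 1/2)`, `1 ≤ i ≤ 2M`, of the elementary symmetric polynomials are the
half-integers `±(j + 1/2)`, `0 ≤ j < M`. Their generating polynomial is therefore `q(X²)` with
`q = ∏_{j < M} (X - (j + 1/2)²)`, so that `P_{2k}(2M, M + 1/2)` is the coefficient of `X^(M - k)`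
in `q`. This makes the numerator `q(-z²)` and the denominator `q(0)`, and their quotient is
`∏_{j < M} (1 + z² / (j + 1/2)²)`.

This is the partial product of Euler's formula for `cos (π w)` at `w = z i`. The cosine formula is
the sine formula at `1/2 + w`, divided by the sine formula at `1/2`: the linear factors regroup,
up to a boundary factor that tends to `1`.
-/

/-- Signed generalized Stirling polynomial `P_k(m,x) = (-1)^k e_k(1-x, 2-x, …, m-x)`,
with `P_k(m,x) = 0` for `k < 0` or `k > m`. -/
noncomputable def P (m : ℕ) (k : ℤ) (x : ℝ) : ℝ :=
  if 0 ≤ k then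
    (-1 : ℝ) ^ k.toNat *
      ∑ S ∈ (Finset.range m).powersetCard k.toNat, ∏ i ∈ S, ((i : ℝ) + 1 - x)
  else 0
open Filter

section StirlingPolynomial

open Polynomial

lemma P_eq_coeff_prod {m k : ℕ} (hk : k ≤ m) (x : ℝ) :
    P m k x =
      (-1) ^ k * (∏ i ∈ Finset.range m, (X + C ((i : ℝ) + 1 - x))).coeff (m - k) := by
  rw [Finset.prod_X_add_C_coeff _ _ (by simp), Finset.card_range, Nat.sub_sub_self hk, P,
    if_pos (Int.natCast_nonneg k), Int.toNat_natCast]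

/-- The monic polynomial whose roots are the squares of the first `M` positive half-integers. It
packages the numbers `P_{2k}(2M, M + 1/2)` as coefficients. -/
noncomputable def halfIntegerSqPoly (M : ℕ) : ℝ[X] :=
  ∏ j ∈ Finset.range M, (X - C (((j : ℝ) + 1 / 2) ^ 2))

lemma natDegree_halfIntegerSqPoly (M : ℕ) : (halfIntegerSqPoly M).natDegree = M := by
  rw [halfIntegerSqPoly, natDegree_finsetProd_X_sub_C_eq_card, Finset.card_range]

lemma aeval_halfIntegerSqPoly {A : Type*} [CommRing A] [Algebra ℝ A] (M : ℕ) (a : A) :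
    aeval a (halfIntegerSqPoly M) =
      ∏ j ∈ Finset.range M, (a - algebraMap ℝ A (((j : ℝ) + 1 / 2) ^ 2)) := by
  simp only [halfIntegerSqPoly, map_prod, map_sub, aeval_X, aeval_C]

lemma prod_X_add_C_eq_expand_halfIntegerSqPoly (M : ℕ) :
    ∏ i ∈ Finset.range (2 * M), (X + C ((i : ℝ) + 1 - (M + 1 / 2))) =
      expand ℝ 2 (halfIntegerSqPoly M) := by
  simp_rw [halfIntegerSqPoly, map_prod, map_sub (expand ℝ 2), expand_X, expand_C]
  rw [two_mul, Finset.prod_range_add, ← Finset.prod_range_reflect, ← Finset.prod_mul_distrib]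
  refine Finset.prod_congr rfl fun j hj => ?_
  have hj' : j + 1 ≤ M := Finset.mem_range.mp hj
  have neg_root : ((M - 1 - j : ℕ) : ℝ) + 1 - (M + 1 / 2) = -((j : ℝ) + 1 / 2) := by
    rw [Nat.sub_sub, add_comm 1 j, Nat.cast_sub hj']
    push_cast
    ring
  have pos_root : ((M + j : ℕ) : ℝ) + 1 - (M + 1 / 2) = (j : ℝ) + 1 / 2 := by
    push_cast
    ring
  rw [neg_root, pos_root, C_neg, C_pow]
  ring

lemma P_two_mul_eq_coeff_halfIntegerSqPoly {M k : ℕ} (hk : k ≤ M) :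
    P (2 * M) ((2 * k : ℕ) : ℤ) (M + 1 / 2) = (halfIntegerSqPoly M).coeff (M - k) := by
  rw [P_eq_coeff_prod (Nat.mul_le_mul_left 2 hk), prod_X_add_C_eq_expand_halfIntegerSqPoly,
    ← Nat.mul_sub, coeff_expand_mul' two_pos, (even_two_mul k).neg_one_pow, one_mul]

lemma sum_P_two_mul_eq_aeval {A : Type*} [CommRing A] [Algebra ℝ A] (M : ℕ) (a : A) :
    ∑ k ∈ Finset.range (M + 1),
        (-1) ^ (M - k) * algebraMap ℝ A (P (2 * M) ((2 * k : ℕ) : ℤ) (M + 1 / 2)) *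
          a ^ (2 * M - 2 * k) =
      aeval (-a ^ 2) (halfIntegerSqPoly M) := by
  conv_rhs =>
    rw [aeval_eq_sum_range, natDegree_halfIntegerSqPoly, ← Finset.sum_range_reflect]
  refine Finset.sum_congr rfl fun k hk => ?_
  rw [P_two_mul_eq_coeff_halfIntegerSqPoly (Nat.le_of_lt_succ (Finset.mem_range.mp hk)),
    ← Nat.mul_sub, pow_mul, Nat.add_sub_cancel, Algebra.smul_def, neg_pow (a ^ 2)]
  ring

lemma P_two_mul_self_eq_aeval {A : Type*} [CommRing A] [Algebra ℝ A] (M : ℕ) :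
    algebraMap ℝ A (P (2 * M) ((2 * M : ℕ) : ℤ) (M + 1 / 2)) =
      aeval 0 (halfIntegerSqPoly M) := by
  rw [P_two_mul_eq_coeff_halfIntegerSqPoly le_rfl, Nat.sub_self, coeff_zero_eq_aeval_zero,
    ← map_zero (algebraMap ℝ A), aeval_algebraMap_apply]

lemma aeval_neg_sq_div_aeval_zero_halfIntegerSqPoly {K : Type*} [Field K] [Algebra ℝ K] (M : ℕ)
    (z : K) :
    aeval (-z ^ 2) (halfIntegerSqPoly M) / aeval 0 (halfIntegerSqPoly M) =
      ∏ j ∈ Finset.range M, (1 + z ^ 2 / ((j : K) + 1 / 2) ^ 2) := by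
  rw [aeval_halfIntegerSqPoly, aeval_halfIntegerSqPoly, ← Finset.prod_div_distrib]
  refine Finset.prod_congr rfl fun j _ => ?_
  have root_ne : algebraMap ℝ K (((j : ℝ) + 1 / 2) ^ 2) ≠ 0 :=
    (_root_.map_ne_zero _).mpr (by positivity)
  have root_eq : algebraMap ℝ K (((j : ℝ) + 1 / 2) ^ 2) = ((j : K) + 1 / 2) ^ 2 := by
    rw [map_pow, map_add, map_div₀, map_natCast, map_one, map_ofNat]
  rw [zero_sub, ← neg_add', neg_div_neg_eq, add_div, div_self root_ne, root_eq, add_comm]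

end StirlingPolynomial

section CosineProduct

lemma natCast_add_half_ne_zero {K : Type*} [Field K] [CharZero K] (n : ℕ) :
    (n : K) + 1 / 2 ≠ 0 := by
  have h : (2 * n + 1 : K) ≠ 0 := mod_cast (2 * n).succ_ne_zero
  contrapose! h
  linear_combination 2 * h

lemma one_add_div_mul_one_sub_sq_div {K : Type*} [Field K] {b c : K} (hb : b ≠ 0)
    (hsub : b - c ≠ 0) (hadd : b + c ≠ 0) (z : K) :
    (1 + z / (b - c)) * (1 - (c + z) ^ 2 / b ^ 2) =
      (1 - c ^ 2 / b ^ 2) * (1 - z ^ 2 / (b - c) ^ 2) * (1 + z / (b + c)) := by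
  field_simp
  ring

lemma half_add_mul_prod_one_sub_sq_div {K : Type*} [Field K] [CharZero K] (z : K) (n : ℕ) :
    (1 / 2 + z) * ∏ j ∈ Finset.range n, (1 - (1 / 2 + z) ^ 2 / ((j : K) + 1) ^ 2) =
      (1 / 2 * ∏ j ∈ Finset.range n, (1 - (1 / 2) ^ 2 / ((j : K) + 1) ^ 2)) *
        (∏ j ∈ Finset.range n, (1 - z ^ 2 / ((j : K) + 1 / 2) ^ 2)) *
          (1 + z / (n + 1 / 2)) := by
  induction n with
  | zero =>
    simp only [Finset.prod_range_zero, Nat.cast_zero]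
    ring
  | succ n ih =>
    have lower : (n : K) + 1 - 1 / 2 = n + 1 / 2 := by ring
    have upper : (n : K) + 1 + 1 / 2 = (n + 1 : ℕ) + 1 / 2 := by push_cast; ring
    have regroup := one_add_div_mul_one_sub_sq_div n.cast_add_one_ne_zero
      (lower ▸ natCast_add_half_ne_zero n) (upper ▸ natCast_add_half_ne_zero (n + 1)) z
    rw [lower, upper] at regroup
    rw [Finset.prod_range_succ, Finset.prod_range_succ, Finset.prod_range_succ, ← mul_assoc, ih,
      mul_assoc, regroup]
    ring

theorem tendsto_euler_cos_prod (z : ℂ) :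
    Tendsto (fun n : ℕ => ∏ j ∈ Finset.range n, (1 - z ^ 2 / ((j : ℂ) + 1 / 2) ^ 2))
      atTop (nhds (Complex.cos (Real.pi * z))) := by
  have shifted := Complex.tendsto_euler_sin_prod (1 / 2 + z)
  have half := Complex.tendsto_euler_sin_prod (1 / 2)
  have sin_shifted : Complex.sin (Real.pi * (1 / 2 + z)) = Complex.cos (Real.pi * z) := by
    rw [mul_add, mul_one_div, add_comm, Complex.sin_add_pi_div_two]
  rw [sin_shifted] at shifted
  have sin_half : Complex.sin (Real.pi * (1 / 2)) = 1 := by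
    rw [mul_one_div, Complex.sin_pi_div_two]
  rw [sin_half] at half
  have boundary : Tendsto (fun n : ℕ => 1 + z / ((n : ℂ) + 1 / 2)) atTop (nhds 1) := by
    simpa [add_comm] using
      (tendsto_add_mul_div_add_mul_atTop_nhds z (1 / 2) 0 one_ne_zero).const_add 1
  have quotient := (shifted.div half one_ne_zero).div boundary one_ne_zero
  rw [div_one, div_one] at quotient
  refine quotient.congr' ?_
  filter_upwards [half.eventually_ne one_ne_zero, boundary.eventually_ne one_ne_zero]
    with n half_ne boundary_ne
  simp only [Pi.div_apply]
  rw [div_div, div_eq_iff (mul_ne_zero half_ne boundary_ne), mul_assoc,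
    half_add_mul_prod_one_sub_sq_div]
  ring

theorem tendsto_euler_cosh_prod (z : ℂ) :
    Tendsto (fun n : ℕ => ∏ j ∈ Finset.range n, (1 + z ^ 2 / ((j : ℂ) + 1 / 2) ^ 2))
      atTop (nhds (Complex.cosh (Real.pi * z))) := by
  have h := tendsto_euler_cos_prod (z * Complex.I)
  simpa only [mul_pow, Complex.I_sq, mul_neg_one, neg_div, sub_neg_eq_add, ← mul_assoc,
    Complex.cos_mul_I] using h

end CosineProduct

theorem cosh_polynomial_limit_general (z : ℂ) :
    Tendsto (fun M : ℕ =>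
        (∑ k ∈ Finset.range (M + 1),
            (-1 : ℂ) ^ (M - k) * P (2 * M) ((2 * k : ℕ) : ℤ) ((M : ℝ) + 1 / 2)
              * z ^ (2 * M - 2 * k))
          / P (2 * M) ((2 * M : ℕ) : ℤ) ((M : ℝ) + 1 / 2))
      atTop (nhds (Complex.cosh (Real.pi * z))) := by
  refine (tendsto_euler_cosh_prod z).congr fun M => ?_
  simp only [← aeval_neg_sq_div_aeval_zero_halfIntegerSqPoly, ← sum_P_two_mul_eq_aeval,
    ← P_two_mul_self_eq_aeval, Complex.coe_algebraMap]

/-- The normalized polynomial sums converge to `cosh (π x)`. -/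
theorem cosh_polynomial_limit (x : ℝ) :
    Tendsto (fun M : ℕ =>
        (∑ k ∈ Finset.range (M + 1),
            (-1 : ℝ) ^ (M - k) * P (2 * M) ((2 * k : ℕ) : ℤ) ((M : ℝ) + 1 / 2)
              * x ^ (2 * M - 2 * k))
          / P (2 * M) ((2 * M : ℕ) : ℤ) ((M : ℝ) + 1 / 2))
      atTop (nhds (Real.cosh (Real.pi * x))) := by
  rw [← tendsto_ofReal_iff]
  exact_mod_cast cosh_polynomial_limit_general x
end

section
/- For every integer m ≥ 0, every integer k with 0 ≤ k ≤ m, and every real x: P_k(m,x) = ∑_{r=0}^{k} (−1)^{r−k} · x^r · C(r+m−k, m−k) · ⟦m+1, r+m−k+1⟧, where C(·,·) denotes the binomial coefficient. -/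
/-- Stirling cycle number (unsigned Stirling number of the first kind):
the coefficient of `x^k` in `x(x+1)⋯(x+n-1)`. -/
noncomputable def stirlingCycle (n k : ℕ) : ℕ := (ascPochhammer ℕ n).coeff k

open Polynomial

theorem coeff_taylor_eq_sum_range {R : Type*} [Semiring R] {p : R[X]} {n k : ℕ}
    (hp : p.natDegree ≤ k + n) (r : R) :
    (taylor r p).coeff n =
      ∑ j ∈ Finset.range (k + 1), ((j + n).choose n : R) * p.coeff (j + n) * r ^ j := by
  have hdeg : (hasseDeriv n p).natDegree < k + 1 :=
    Nat.lt_succ_of_le ((natDegree_hasseDeriv_le p n).trans (Nat.sub_le_of_le_add hp))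
  simp only [taylor_coeff, eval_eq_sum_range' hdeg, hasseDeriv_coeff]

section RisingFactorial

variable (R : Type*)

theorem natDegree_ascPochhammer_le [Semiring R] (n : ℕ) : (ascPochhammer R n).natDegree ≤ n := by
  rw [← ascPochhammer_map (Nat.castRingHom R)]
  exact natDegree_map_le.trans (ascPochhammer_natDegree ℕ n).le

theorem coeff_ascPochhammer [Semiring R] (n k : ℕ) :
    (ascPochhammer R n).coeff k = stirlingCycle n k := by
  rw [← ascPochhammer_map (Nat.castRingHom R), coeff_map, eq_natCast, stirlingCycle]

theorem coeff_taylor_one_ascPochhammer [Semiring R] (n k : ℕ) :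
    (taylor 1 (ascPochhammer R n)).coeff k = stirlingCycle (n + 1) (k + 1) := by
  rw [← coeff_ascPochhammer, ascPochhammer_succ_left, coeff_X_mul, taylor_apply, C_1]

variable {R} [CommSemiring R]

theorem taylor_ascPochhammer_eq_prod_range (r : R) (n : ℕ) :
    taylor r (ascPochhammer R n) = ∏ i ∈ Finset.range n, (X + C ((i : R) + r)) := by
  induction n with
  | zero => simp
  | succ n ih =>
    rw [ascPochhammer_succ_right, taylor_mul, ih, Finset.prod_range_succ]
    congr 1
    rw [map_add, taylor_X, ← C_eq_natCast, taylor_C, C_add]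
    ring

theorem sum_powersetCard_prod_natCast_add (r : R) (n k : ℕ) :
    ∑ S ∈ (Finset.range (k + n)).powersetCard k, ∏ i ∈ S, ((i : R) + r) =
      (taylor r (ascPochhammer R (k + n))).coeff n := by
  rw [taylor_ascPochhammer_eq_prod_range, Finset.prod_X_add_C_coeff _ _ (by simp),
    Finset.card_range, Nat.add_sub_cancel]

theorem sum_powersetCard_prod_natCast_add_one_add (r : R) (n k : ℕ) :
    ∑ S ∈ (Finset.range (k + n)).powersetCard k, ∏ i ∈ S, ((i : R) + 1 + r) =
      ∑ j ∈ Finset.range (k + 1),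
        ((j + n).choose n : R) * (stirlingCycle (k + n + 1) (j + n + 1) : R) * r ^ j := by
  have hdeg : (taylor 1 (ascPochhammer R (k + n))).natDegree ≤ k + n :=
    (natDegree_taylor _ _).trans_le (natDegree_ascPochhammer_le R _)
  simp only [add_assoc _ (1 : R) r]
  rw [sum_powersetCard_prod_natCast_add, add_comm 1 r, ← taylor_taylor,
    coeff_taylor_eq_sum_range hdeg]
  simp only [coeff_taylor_one_ascPochhammer]

end RisingFactorial

theorem neg_one_pow_mul_neg_pow {M : Type*} [Monoid M] [HasDistribNeg M] {r k : ℕ} (hr : r ≤ k)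
    (x : M) : (-1) ^ k * (-x) ^ r = (-1) ^ (k - r) * x ^ r := by
  rw [← pow_sub_mul_pow (-1 : M) hr, mul_assoc, ← (Commute.neg_one_left (-x)).mul_pow,
    neg_one_mul, neg_neg]

theorem P_explicit_general {R : Type*} [CommRing R] (m k : ℕ) (hk : k ≤ m) (x : R) :
    (-1) ^ k * ∑ S ∈ (Finset.range m).powersetCard k, ∏ i ∈ S, ((i : R) + 1 - x) =
      ∑ r ∈ Finset.range (k + 1),
        (-1) ^ (k - r) * x ^ r * ((r + m - k).choose (m - k) : R) *
          (stirlingCycle (m + 1) (r + m - k + 1) : R) := by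
  obtain ⟨n, rfl⟩ := Nat.exists_eq_add_of_le hk
  simp only [sub_eq_add_neg _ x]
  rw [sum_powersetCard_prod_natCast_add_one_add, Finset.mul_sum]
  refine Finset.sum_congr rfl fun r hr => ?_
  rw [← neg_one_pow_mul_neg_pow (Finset.mem_range_succ_iff.mp hr), Nat.add_sub_cancel_left,
    Nat.add_sub_assoc hk, Nat.add_sub_cancel_left]
  ring

/-- Explicit formula:
`P_k(m,x) = ∑_{r=0}^k (-1)^{r-k} x^r C(r+m-k, m-k) ⟦m+1, r+m-k+1⟧`
(the sign `(-1)^{r-k}` is written as `(-1)^{k-r}`, which is equal). -/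
theorem P_explicit (m k : ℕ) (hk : k ≤ m) (x : ℝ) :
    P m (k : ℤ) x
      = ∑ r ∈ Finset.range (k + 1),
          (-1 : ℝ) ^ (k - r) * x ^ r * ((r + m - k).choose (m - k) : ℝ) *
            (stirlingCycle (m + 1) (r + m - k + 1) : ℝ) := by
  rw [P, if_pos (Int.natCast_nonneg k), Int.toNat_natCast, P_explicit_general m k hk x]
end

section
/- (i) The function x ↦ (sech x − sech x/(2 − sech x)²)/x² is Lebesgue integrable on (0,∞); (ii) the series ∑_{j=1}^{∞} (j/2^{j+1})·χ_j converges and equals ∫_{(0,∞)} (sech x − sech x/(2 − sech x)²)/x² dx; and (iii) the normalized partial sums (1/catalan(N)) · ∑_{j=1}^{N} (j/N)·C(2N−j−1, N−1)·χ_j converge, as N → ∞, to the same integral, where C(·,·) denotes the binomial coefficient and catalan(N) is the N-th Catalan number. -/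
/-!
The numbers `(j / N) * C(2N - j - 1, N - 1)` count Dyck paths of semilength `N` by their number `j`
of returns to the axis.  Divided by `catalan N` they tend, as `N → ∞`, to the negative binomial
weights `j / 2 ^ (j + 1)`, and stay below `4` times these, so dominated convergence gives (iii) from
(ii).  For (ii), the negative binomial weights have total mass `1` and generating function
`s / (2 - s)²`, and the series may be integrated term by term: Bernoulli's inequality yields
`0 ≤ s - s ^ j ≤ j * s * (1 - s)` for `j ≥ 1`, and `s * (1 - s) / x² ≤ exp (-x)` when `s = sech x`.
-/

open MeasureTheory

/-- Hyperbolic secant. -/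
noncomputable def sech (x : ℝ) : ℝ := 1 / Real.cosh x

/-- The integral sequence `χ_n = ∫_0^∞ (sech x - sech^n x)/x² dx`. -/
noncomputable def chi (n : ℕ) : ℝ :=
  ∫ x in Set.Ioi (0 : ℝ), (sech x - (sech x) ^ n) / x ^ 2
open Filter

section DominatedSeries

variable {α ι E : Type*} [MeasurableSpace α] {μ : Measure α} [Countable ι] [NormedAddCommGroup E]
  [NormedSpace ℝ E]

theorem integrable_and_hasSum_integral_of_norm_le_mul {F : ι → α → E} {f : α → E} {c : ι → ℝ}
    {g : α → ℝ} (hF : ∀ i, AEStronglyMeasurable (F i) μ)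
    (hFg : ∀ i, ∀ᵐ x ∂μ, ‖F i x‖ ≤ c i * g x) (hc : Summable c) (hg : Integrable g μ)
    (hf : ∀ᵐ x ∂μ, HasSum (fun i => F i x) (f x)) :
    Integrable f μ ∧ HasSum (fun i => ∫ x, F i x ∂μ) (∫ x, f x ∂μ) := by
  have bound_integrable : Integrable (fun x => ∑' i, c i * g x) μ := by
    simpa only [tsum_mul_right] using hg.const_mul (∑' i, c i)
  have bound_summable (x : α) : Summable fun i => c i * g x := hc.mul_right (g x)
  refine ⟨bound_integrable.mono' ?_ ?_, hasSum_integral_of_dominated_convergence _ hF hFg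
    (Eventually.of_forall bound_summable) bound_integrable hf⟩
  · exact aestronglyMeasurable_of_tendsto_ae atTop
      (fun s : Finset ι => Finset.aestronglyMeasurable_fun_sum s fun i _ => hF i) hf
  · filter_upwards [hf, ae_all_iff.2 hFg] with x hfx hFgx
    exact hfx.norm_le_of_bounded (bound_summable x).hasSum hFgx

end DominatedSeries

lemma abs_sub_pow_le_mul {R : Type*} [CommRing R] [LinearOrder R] [IsStrictOrderedRing R] {s : R}
    (hs₀ : 0 ≤ s) (hs₁ : s ≤ 1) {j : ℕ} (hj : j ≠ 0) :
    |s - s ^ j| ≤ j * (s * (1 - s)) := by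
  have bernoulli : 1 - s ^ j ≤ j * (1 - s) := by
    linarith [one_add_mul_sub_le_pow (by linarith : -1 ≤ s) j]
  rw [abs_of_nonneg (sub_nonneg.2 (pow_le_of_le_one hs₀ hs₁ hj))]
  obtain ⟨n, rfl⟩ := Nat.exists_eq_succ_of_ne_zero hj
  have pow_succ_le : s ^ (n + 1) ≤ s ^ n := pow_le_pow_of_le_one hs₀ hs₁ n.le_succ
  calc s - s ^ (n + 1) = s * (1 - s ^ n) := by ring
    _ ≤ s * (1 - s ^ (n + 1)) := by gcongr
    _ ≤ s * ((n + 1 : ℕ) * (1 - s)) := by gcongr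
    _ = (n + 1 : ℕ) * (s * (1 - s)) := by ring

section Sech

lemma sech_pos (x : ℝ) : 0 < sech x := one_div_pos.2 (Real.cosh_pos x)

lemma sech_le_one (x : ℝ) : sech x ≤ 1 := (div_le_one (Real.cosh_pos x)).2 (Real.one_le_cosh x)

@[fun_prop]
lemma measurable_sech : Measurable sech := measurable_const.div Real.measurable_cosh

lemma one_sub_sech_le_half_sq (x : ℝ) : 1 - sech x ≤ x ^ 2 / 2 := by
  have exp_le_sech : Real.exp (-(x ^ 2 / 2)) ≤ sech x := by
    rw [Real.exp_neg, ← one_div]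
    exact one_div_le_one_div_of_le (Real.cosh_pos x) (Real.cosh_le_exp_half_sq x)
  linarith [Real.add_one_le_exp (-(x ^ 2 / 2))]

lemma sech_le_two_mul_exp_neg (x : ℝ) : sech x ≤ 2 * Real.exp (-x) := by
  have exp_half_le_cosh : Real.exp x / 2 ≤ Real.cosh x := by
    rw [Real.cosh_eq]
    linarith [Real.exp_pos (-x)]
  calc sech x ≤ 1 / (Real.exp x / 2) := one_div_le_one_div_of_le (by positivity) exp_half_le_cosh
    _ = 2 * Real.exp (-x) := by rw [one_div_div, Real.exp_neg, div_eq_mul_inv]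

lemma sech_mul_one_sub_sech_div_sq_le_exp_neg (x : ℝ) :
    sech x * (1 - sech x) / x ^ 2 ≤ Real.exp (-x) := by
  refine div_le_of_le_mul₀ (sq_nonneg x) (Real.exp_pos _).le ?_
  calc sech x * (1 - sech x) ≤ 2 * Real.exp (-x) * (x ^ 2 / 2) :=
        mul_le_mul (sech_le_two_mul_exp_neg x) (one_sub_sech_le_half_sq x)
          (sub_nonneg.2 (sech_le_one x)) (by positivity)
    _ = Real.exp (-x) * x ^ 2 := by ring

lemma abs_sech_sub_pow_div_sq_le {j : ℕ} (hj : j ≠ 0) (x : ℝ) :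
    |(sech x - sech x ^ j) / x ^ 2| ≤ j * Real.exp (-x) := by
  rw [abs_div, abs_of_nonneg (sq_nonneg x)]
  calc |sech x - sech x ^ j| / x ^ 2 ≤ j * (sech x * (1 - sech x)) / x ^ 2 := by
        gcongr
        exact abs_sub_pow_le_mul (sech_pos x).le (sech_le_one x) hj
    _ = j * (sech x * (1 - sech x) / x ^ 2) := mul_div_assoc _ _ _
    _ ≤ j * Real.exp (-x) := by
        gcongr
        exact sech_mul_one_sub_sech_div_sq_le_exp_neg x

theorem integrableOn_and_hasSum_mul_chi {w : ℕ → ℝ} {f : ℝ → ℝ} (hw₀ : w 0 = 0)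
    (hw : Summable fun j => |w j| * j)
    (hf : ∀ s ∈ Set.Ioc (0 : ℝ) 1, HasSum (fun j => w j * (s - s ^ j)) (f s)) :
    IntegrableOn (fun x => f (sech x) / x ^ 2) (Set.Ioi 0) ∧
      HasSum (fun j => w j * chi j) (∫ x in Set.Ioi (0 : ℝ), f (sech x) / x ^ 2) := by
  have term_le (j : ℕ) (x : ℝ) :
      ‖w j * ((sech x - sech x ^ j) / x ^ 2)‖ ≤ |w j| * j * Real.exp (-x) := by
    rcases eq_or_ne j 0 with rfl | hj
    · simp [hw₀]
    · rw [norm_mul, mul_assoc]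
      exact mul_le_mul_of_nonneg_left (abs_sech_sub_pow_div_sq_le hj x) (abs_nonneg _)
  have hasSum_term (x : ℝ) :
      HasSum (fun j => w j * ((sech x - sech x ^ j) / x ^ 2)) (f (sech x) / x ^ 2) := by
    simpa only [mul_div_assoc] using
      (hf (sech x) ⟨sech_pos x, sech_le_one x⟩).div_const (x ^ 2)
  simpa only [IntegrableOn, chi, integral_const_mul] using
    integrable_and_hasSum_integral_of_norm_le_mul
      (fun j => Measurable.aestronglyMeasurable (by fun_prop))
      (fun j => Eventually.of_forall (term_le j)) hw (integrableOn_exp_neg_Ioi 0)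
      (Eventually.of_forall hasSum_term)

end Sech

section NegativeBinomial

lemma hasSum_div_two_pow_succ_mul_pow {s : ℝ} (hs : |s| < 2) :
    HasSum (fun j : ℕ => (j : ℝ) / 2 ^ (j + 1) * s ^ j) (s / (2 - s) ^ 2) := by
  have half_lt_one : ‖s / 2‖ < 1 := by
    rw [norm_div, Real.norm_eq_abs, Real.norm_two]
    linarith
  have two_sub_ne_zero : 2 - s ≠ 0 := by linarith [le_abs_self s]
  convert! (hasSum_coe_mul_geometric_of_norm_lt_one half_lt_one).mul_left (1 / 2) using 1
  · funext j
    rw [div_pow, pow_succ]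
    field
  · rw [show 1 - s / 2 = (2 - s) / 2 by ring]
    field

lemma hasSum_div_two_pow_succ_mul_sub_pow {s : ℝ} (hs : |s| < 2) :
    HasSum (fun j : ℕ => (j : ℝ) / 2 ^ (j + 1) * (s - s ^ j)) (s - s / (2 - s) ^ 2) := by
  have total_mass : HasSum (fun j : ℕ => (j : ℝ) / 2 ^ (j + 1)) 1 := by
    convert! hasSum_div_two_pow_succ_mul_pow (s := 1) (by norm_num) using 1
    · simp only [one_pow, mul_one]
    · norm_num
  simpa only [mul_sub, one_mul] using
    (total_mass.mul_right s).sub (hasSum_div_two_pow_succ_mul_pow hs)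

lemma summable_abs_div_two_pow_succ_mul :
    Summable fun j : ℕ => |(j : ℝ) / 2 ^ (j + 1)| * j := by
  convert! (summable_pow_mul_geometric_of_norm_lt_one 2
    (by norm_num : ‖(1 / 2 : ℝ)‖ < 1)).mul_left (1 / 2) using 2 with j
  rw [abs_of_nonneg (by positivity), one_div_pow, pow_succ]
  field

end NegativeBinomial

section BinomialRatio

lemma two_pow_mul_choose_le_choose_add {n i k : ℕ} (h : n + i ≤ 2 * k) :
    2 ^ i * n.choose k ≤ (n + i).choose k := by
  induction i with
  | zero => simp
  | succ i ih =>
    have double_le : 2 * (n + i).choose k ≤ (n + i + 1).choose k := by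
      refine Nat.le_of_mul_le_mul_right ?_ (n + i).succ_pos
      calc 2 * (n + i).choose k * (n + i + 1)
          = (n + i + 1).choose k * (2 * (n + i + 1 - k)) := by
            rw [mul_assoc, Nat.choose_mul_succ_eq]
            ring
        _ ≤ (n + i + 1).choose k * (n + i + 1) := by gcongr; omega
    calc 2 ^ (i + 1) * n.choose k = 2 * (2 ^ i * n.choose k) := by ring
      _ ≤ 2 * (n + i).choose k := by gcongr; exact ih (by omega)
      _ ≤ (n + (i + 1)).choose k := double_le

lemma choose_two_mul_sub_div_centralBinom_le {m i : ℕ} (hi : i ≤ 2 * m) :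
    ((2 * m - i).choose m : ℝ) / m.centralBinom ≤ 1 / 2 ^ i := by
  have pow_mul_le : 2 ^ i * (2 * m - i).choose m ≤ m.centralBinom := by
    simpa only [Nat.sub_add_cancel hi, Nat.centralBinom_eq_two_mul_choose] using
      two_pow_mul_choose_le_choose_add (n := 2 * m - i) (i := i) (k := m) (by omega)
  rw [div_le_div_iff₀ (by exact_mod_cast m.centralBinom_pos) (by positivity), one_mul, mul_comm]
  exact_mod_cast pow_mul_le

lemma choose_two_mul_sub_succ {m i : ℕ} (hi : i < m) :
    ((2 * m - (i + 1)).choose m : ℝ) = (2 * m - i).choose m * ((m - i) / (2 * m - i)) := by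
  have choose_mul : (2 * m - (i + 1)).choose m * (2 * m - i) = (2 * m - i).choose m * (m - i) := by
    rw [show 2 * m - i = 2 * m - (i + 1) + 1 by omega,
      show m - i = 2 * m - (i + 1) + 1 - m by omega, Nat.choose_mul_succ_eq]
  have cast_choose_mul := congrArg (Nat.cast (R := ℝ)) choose_mul
  push_cast [Nat.cast_sub hi.le, Nat.cast_sub (by omega : i ≤ 2 * m)] at cast_choose_mul
  have lt_cast : (i : ℝ) < m := by exact_mod_cast hi
  rw [← mul_div_assoc, eq_div_iff (by linarith [m.cast_nonneg (α := ℝ)]), cast_choose_mul]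

lemma tendsto_choose_two_mul_sub_div_centralBinom (i : ℕ) :
    Tendsto (fun m : ℕ => ((2 * m - i).choose m : ℝ) / m.centralBinom) atTop
      (nhds (1 / 2 ^ i)) := by
  induction i with
  | zero =>
    refine tendsto_const_nhds.congr fun m => ?_
    rw [Nat.sub_zero, ← Nat.centralBinom_eq_two_mul_choose, pow_zero, div_one,
      div_self (by exact_mod_cast m.centralBinom_ne_zero)]
  | succ i ih =>
    have factor : Tendsto (fun m : ℕ => ((m : ℝ) - i) / (2 * m - i)) atTop (nhds (1 / 2)) := by
      convert! tendsto_add_mul_div_add_mul_atTop_nhds (-i : ℝ) (-i) 1 two_ne_zero using 3 <;> ring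
    rw [pow_succ, ← one_div_mul_one_div]
    refine (ih.mul factor).congr' ?_
    filter_upwards [eventually_gt_atTop i] with m hm
    rw [choose_two_mul_sub_succ hm, div_mul_eq_mul_div]

end BinomialRatio

section CatalanRatio

lemma catalan_pos (n : ℕ) : 0 < catalan n :=
  Nat.pos_of_mul_pos_left (succ_mul_catalan_eq_centralBinom n ▸ n.centralBinom_pos)

lemma add_two_mul_catalan_succ (n : ℕ) :
    (n + 2) * catalan (n + 1) = 2 * (2 * n + 1) * catalan n := by
  refine Nat.eq_of_mul_eq_mul_left n.succ_pos ?_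
  calc (n + 1) * ((n + 2) * catalan (n + 1)) = (n + 1) * (n + 1).centralBinom := by
        rw [← succ_mul_catalan_eq_centralBinom (n + 1)]
    _ = 2 * (2 * n + 1) * n.centralBinom := Nat.succ_mul_centralBinom_succ n
    _ = (n + 1) * (2 * (2 * n + 1) * catalan n) := by
        rw [← succ_mul_catalan_eq_centralBinom n]
        ring

lemma catalan_div_catalan_succ (n : ℕ) :
    (catalan n : ℝ) / catalan (n + 1) = (2 + 1 * n) / (2 + 4 * n) := by
  have succ_ne_zero : (catalan (n + 1) : ℝ) ≠ 0 := by exact_mod_cast (catalan_pos (n + 1)).ne'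
  have recurrence : ((n : ℝ) + 2) * catalan (n + 1) = 2 * (2 * n + 1) * catalan n := by
    exact_mod_cast add_two_mul_catalan_succ n
  rw [div_eq_div_iff succ_ne_zero (by positivity)]
  linarith

lemma catalan_div_catalan_succ_le_one (n : ℕ) : (catalan n : ℝ) / catalan (n + 1) ≤ 1 := by
  rw [catalan_div_catalan_succ, div_le_one (by positivity)]
  gcongr
  norm_num

lemma tendsto_catalan_div_catalan_succ :
    Tendsto (fun n => (catalan n : ℝ) / catalan (n + 1)) atTop (nhds (1 / 4)) := by
  simpa only [catalan_div_catalan_succ] using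
    tendsto_add_mul_div_add_mul_atTop_nhds (2 : ℝ) 2 1 four_ne_zero

end CatalanRatio

/-- The proportion of Dyck paths of semilength `N` with exactly `j` returns to the axis. It has this
meaning only for `1 ≤ j ≤ N`: truncated subtraction makes `staircaseWeight 1 j = j` for all `j`. -/
noncomputable def staircaseWeight (N j : ℕ) : ℝ :=
  1 / catalan N * (j / N * (2 * N - j - 1).choose (N - 1))

namespace staircaseWeight

lemma nonneg (N j : ℕ) : 0 ≤ staircaseWeight N j := by
  unfold staircaseWeight
  positivity

lemma zero_right (N : ℕ) : staircaseWeight N 0 = 0 := by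
  simp [staircaseWeight]

lemma eq_zero_of_lt {N j : ℕ} (hN : 2 ≤ N) (hj : N < j) : staircaseWeight N j = 0 := by
  simp [staircaseWeight, Nat.choose_eq_zero_of_lt (by omega : 2 * N - j - 1 < N - 1)]

lemma succ_succ (m i : ℕ) :
    staircaseWeight (m + 1) (i + 1) =
      (i + 1 : ℕ) * (catalan m / catalan (m + 1)) *
        ((2 * m - i).choose m / m.centralBinom) := by
  have catalan_ne_zero : (catalan m : ℝ) ≠ 0 := by exact_mod_cast (catalan_pos m).ne'
  rw [staircaseWeight, show 2 * (m + 1) - (i + 1) - 1 = 2 * m - i by omega, Nat.add_sub_cancel,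
    ← succ_mul_catalan_eq_centralBinom m, Nat.cast_mul]
  field

lemma le_four_mul {N : ℕ} (hN : 2 ≤ N) (j : ℕ) :
    staircaseWeight N j ≤ 4 * (j / 2 ^ (j + 1)) := by
  rcases lt_or_ge N j with hNj | hjN
  · rw [eq_zero_of_lt hN hNj]
    positivity
  obtain _ | i := j
  · simp [zero_right]
  obtain ⟨m, rfl⟩ : ∃ m, N = m + 1 := ⟨N - 1, by omega⟩
  calc staircaseWeight (m + 1) (i + 1) ≤ (i + 1 : ℕ) * 1 * (1 / 2 ^ i) := by
        rw [succ_succ]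
        gcongr _ * ?_ * ?_
        · exact catalan_div_catalan_succ_le_one m
        · exact choose_two_mul_sub_div_centralBinom_le (by omega)
    _ = 4 * ((i + 1 : ℕ) / 2 ^ (i + 1 + 1)) := by
        rw [pow_succ, pow_succ]
        field

lemma tendsto_div_two_pow_succ (j : ℕ) :
    Tendsto (fun N => staircaseWeight N j) atTop (nhds (j / 2 ^ (j + 1))) := by
  obtain _ | i := j
  · simp [zero_right]
  rw [← tendsto_add_atTop_iff_nat 1]
  convert! (tendsto_catalan_div_catalan_succ.const_mul ((i + 1 : ℕ) : ℝ)).mul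
    (tendsto_choose_two_mul_sub_div_centralBinom i) using 2 with m
  · exact succ_succ m i
  · rw [pow_succ, pow_succ]
    field

lemma tendsto_sum_smul {E : Type*} [NormedAddCommGroup E] [NormedSpace ℝ E] [CompleteSpace E]
    {a : ℕ → E} (ha : Summable fun j : ℕ => ‖((j : ℝ) / 2 ^ (j + 1)) • a j‖) :
    Tendsto (fun N => ∑ j ∈ Finset.Icc 1 N, staircaseWeight N j • a j) atTop
      (nhds (∑' j : ℕ, ((j : ℝ) / 2 ^ (j + 1)) • a j)) := by
  have term_le : ∀ᶠ N in atTop, ∀ j : ℕ,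
      ‖staircaseWeight N j • a j‖ ≤ 4 * ‖((j : ℝ) / 2 ^ (j + 1)) • a j‖ := by
    filter_upwards [eventually_ge_atTop 2] with N hN j
    rw [norm_smul, norm_smul, Real.norm_of_nonneg (nonneg N j), Real.norm_of_nonneg (by positivity),
      ← mul_assoc]
    gcongr
    exact le_four_mul hN j
  refine (tendsto_tsum_of_dominated_convergence (ha.mul_left 4)
    (fun j => (tendsto_div_two_pow_succ j).smul_const (a j)) term_le).congr' ?_
  filter_upwards [eventually_ge_atTop 2] with N hN
  refine tsum_eq_sum fun j hj => ?_
  obtain rfl | hNj : j = 0 ∨ N < j := by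
    rw [Finset.mem_Icc] at hj
    omega
  · rw [zero_right, zero_smul]
  · rw [eq_zero_of_lt hN hNj, zero_smul]

end staircaseWeight

/-- Normalized limiting identity for the staircase family. -/
theorem staircase_normalized_limit :
    IntegrableOn (fun x : ℝ =>
        (sech x - sech x / (2 - sech x) ^ 2) / x ^ 2) (Set.Ioi 0)
    ∧ HasSum (fun j : ℕ => (j : ℝ) / 2 ^ (j + 1) * chi j)
        (∫ x in Set.Ioi (0 : ℝ), (sech x - sech x / (2 - sech x) ^ 2) / x ^ 2)
    ∧ Tendsto (fun N : ℕ =>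
        (1 / (catalan N : ℝ)) *
          ∑ j ∈ Finset.Icc 1 N,
            ((j : ℝ) / (N : ℝ)) * ((2 * N - j - 1).choose (N - 1) : ℝ) * chi j)
      atTop
      (nhds (∫ x in Set.Ioi (0 : ℝ), (sech x - sech x / (2 - sech x) ^ 2) / x ^ 2)) := by
  obtain ⟨integrable, hasSum⟩ := integrableOn_and_hasSum_mul_chi
    (w := fun j : ℕ => (j : ℝ) / 2 ^ (j + 1)) (f := fun s => s - s / (2 - s) ^ 2) (by simp)
    summable_abs_div_two_pow_succ_mul
    fun s hs => hasSum_div_two_pow_succ_mul_sub_pow (by rw [abs_of_pos hs.1]; linarith [hs.2])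
  refine ⟨integrable, hasSum, ?_⟩
  rw [← hasSum.tsum_eq]
  simpa only [Finset.mul_sum, staircaseWeight, smul_eq_mul, mul_assoc] using
    staircaseWeight.tendsto_sum_smul (a := chi) hasSum.summable.norm
end
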